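/- The theory T*_feq (the model completion of T_feq) does not have SOP₁: no formula φ(x̄,ȳ) exemplifies SOP₁ in the monster model of T*_feq. -/

import Mathlib

open FirstOrder FirstOrder.Language

namespace SopPaper

variable {L : FirstOrder.Language.{0, 0}}

/-- A first-order formula with parameters from `M`, in free variables indexed by `Fin m`. -/
structure ParamFormula (L : FirstOrder.Language.{0, 0}) (M : Type*) [L.Structure M] (m : ℕ) where
  k : ℕ
  toFormula : L.Formula (Fin m ⊕ Fin k)
  par : Fin k → M

variable {M : Type*} [L.Structure M]

/-- Realization of a formula with parameters at a tuple `e`. -/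
def ParamFormula.Realize {m : ℕ} (ψ : ParamFormula L M m) (e : Fin m → M) : Prop :=
  ψ.toFormula.Realize (Sum.elim e ψ.par)

/-- A tuple `e` realizes the partial type `p`. -/
def Realizes {m : ℕ} (p : Set (ParamFormula L M m)) (e : Fin m → M) : Prop :=
  ∀ ψ ∈ p, ψ.Realize e

/-- A partial type (over the monster model) is consistent iff it is realized. -/
def Consistent {m : ℕ} (p : Set (ParamFormula L M m)) : Prop :=
  ∃ e, Realizes p e

/-- The restriction `ρ ↾ k` of an infinite branch `ρ ∈ 2^ω` to a finite sequence. -/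
def restrict (ρ : ℕ → Bool) (k : ℕ) : List Bool :=
  List.ofFn fun i : Fin k => ρ i

/-- `φ(x̄, ȳ)` exemplifies SOP₁ in the structure `M` (thought of as the monster model):
there is a tree of parameters `⟨ā_η : η ∈ 2^{<ω}⟩` such that every branch is consistent,
and `{φ(x̄, ā_η), φ(x̄, ā_{ν⌢⟨1⟩})}` is inconsistent whenever `ν⌢⟨0⟩ ⊴ η`. -/
def ExemplifiesSOP1 {mx my : ℕ} (φ : L.Formula (Fin mx ⊕ Fin my)) (M : Type*)
    [L.Structure M] : Prop :=
  ∃ a : List Bool → Fin my → M,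
    (∀ ρ : ℕ → Bool, ∃ e : Fin mx → M, ∀ k : ℕ,
        φ.Realize (Sum.elim e (a (restrict ρ k)))) ∧
    ∀ ν η : List Bool, (ν ++ [false]) <+: η →
      ¬ ∃ e : Fin mx → M,
          φ.Realize (Sum.elim e (a η)) ∧ φ.Realize (Sum.elim e (a (ν ++ [true])))

/-- `φ(x̄, ȳ)` exemplifies SOP₁' in the structure `M`:  there is a tree of parameters
`⟨ā_η : η ∈ 2^{<ω}⟩` such that for every branch `ρ ∈ 2^ω` the signed set
`{φ(x̄, ā_{ρ↾n})^{ρ(n)} : n < ω}` is consistent, and `{φ(x̄, ā_η), φ(x̄, ā_ν)}` is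
inconsistent whenever `ν⌢⟨0⟩ ⊴ η`. -/
def ExemplifiesSOP1' {mx my : ℕ} (φ : L.Formula (Fin mx ⊕ Fin my)) (M : Type*)
    [L.Structure M] : Prop :=
  ∃ a : List Bool → Fin my → M,
    (∀ ρ : ℕ → Bool, ∃ e : Fin mx → M, ∀ k : ℕ,
        (φ.Realize (Sum.elim e (a (restrict ρ k))) ↔ ρ k = true)) ∧
    ∀ ν η : List Bool, (ν ++ [false]) <+: η →
      ¬ ∃ e : Fin mx → M,
          φ.Realize (Sum.elim e (a η)) ∧ φ.Realize (Sum.elim e (a ν))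

/-- The formula `¬ (∃ x̄)(φ(x̄, ȳ) ∧ φ(x̄, z̄))` in the variables `ȳ ⊕ z̄`. -/
def incompatFormula {mx my : ℕ} (φ : L.Formula (Fin mx ⊕ Fin my)) :
    L.Formula (Fin my ⊕ Fin my) :=
  (((BoundedFormula.relabel
        (Sum.elim (fun i => Sum.inr i) fun j => Sum.inl (Sum.inl j)) φ) ⊓
      (BoundedFormula.relabel
        (Sum.elim (fun i => Sum.inr i) fun j => Sum.inl (Sum.inr j)) φ)).exs).not

/-- `rk¹_φ(p, q) ≥ n`. -/
def RankGE {mx my : ℕ} (φ : L.Formula (Fin mx ⊕ Fin my)) :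
    ℕ → Set (ParamFormula L M mx) → Set (ParamFormula L M my) → Prop
  | 0, p, q => Consistent p ∧ Consistent q
  | n + 1, p, q =>
      ∃ c : Fin my → M, Realizes q c ∧
        RankGE φ n (insert ⟨my, φ, c⟩ p) q ∧
        RankGE φ n p (insert ⟨my, incompatFormula φ, c⟩ q)

/-- `a` is a `φ`-SOP₁' tree for `p(x̄)` and `q(ȳ)` of depth `n`. -/
def IsSOP1'Tree {mx my : ℕ} (φ : L.Formula (Fin mx ⊕ Fin my))
    (p : Set (ParamFormula L M mx)) (q : Set (ParamFormula L M my))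
    (n : ℕ) (a : List Bool → Fin my → M) : Prop :=
  (∀ η : List Bool, η.length = n → ∃ e : Fin mx → M, Realizes p e ∧
      ∀ ℓ : ℕ, ℓ < n →
        (φ.Realize (Sum.elim e (a (η.take ℓ))) ↔ η.getD ℓ false = true)) ∧
  (∀ η : List Bool, η.length ≤ n → Realizes q (a η)) ∧
  (∀ ν η : List Bool, η.length ≤ n → (ν ++ [false]) <+: η →
      ¬ ∃ e : Fin mx → M,
          φ.Realize (Sum.elim e (a η)) ∧ φ.Realize (Sum.elim e (a ν)))

/-- `φ(x̄, ȳ)` exemplifies SOP₂ in the structure `M`. -/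
def ExemplifiesSOP2 {mx my : ℕ} (φ : L.Formula (Fin mx ⊕ Fin my)) (M : Type*)
    [L.Structure M] : Prop :=
  ∃ a : List Bool → Fin my → M,
    (∀ ρ : ℕ → Bool, ∃ e : Fin mx → M, ∀ k : ℕ,
        φ.Realize (Sum.elim e (a (restrict ρ k)))) ∧
    ∀ η ν : List Bool, ¬ η <+: ν → ¬ ν <+: η →
      ¬ ∃ e : Fin mx → M,
          φ.Realize (Sum.elim e (a η)) ∧ φ.Realize (Sum.elim e (a ν))


/-- The language `{Q, P, E, R, F}` of `T_feq`: a binary function symbol `F`. -/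
inductive FeqFunc : ℕ → Type
  | F : FeqFunc 2

/-- The relation symbols of `T_feq`: unary `P`, `Q` and binary `E`, `R`. -/
inductive FeqRel : ℕ → Type
  | P : FeqRel 1
  | Q : FeqRel 1
  | E : FeqRel 2
  | R : FeqRel 2

/-- The language `{Q, P, E, R, F}`. -/
def Lfeq : FirstOrder.Language.{0, 0} := ⟨FeqFunc, FeqRel⟩

section Feq

variable {M : Type*} [Lfeq.Structure M]

/-- The predicate `P`. -/
def feqP (x : M) : Prop := Structure.RelMap (L := Lfeq) FeqRel.P ![x]

/-- The predicate `Q`. -/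
def feqQ (x : M) : Prop := Structure.RelMap (L := Lfeq) FeqRel.Q ![x]

/-- The relation `E`. -/
def feqE (x y : M) : Prop := Structure.RelMap (L := Lfeq) FeqRel.E ![x, y]

/-- The relation `R`. -/
def feqR (x y : M) : Prop := Structure.RelMap (L := Lfeq) FeqRel.R ![x, y]

/-- The function `F`. -/
def feqF (x z : M) : M := Structure.funMap (L := Lfeq) FeqFunc.F ![x, z]

/-- The axioms of `T_feq`: `P` and `Q` are disjoint unary predicates covering the universe;
`E` is an equivalence relation on `Q`; `R ⊆ Q × P` is such that
`x R z & y R z & x E y` implies `x = y`; and `F : Q × P → Q` satisfies `F(x,z) R z` and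
`x E F(x,z)` (so `F(x,z)` picks the representative of the `E`-class of `x` that is in the
relation `R` with `z`). -/
def IsFeqStructure (M : Type*) [Lfeq.Structure M] : Prop :=
  (∀ x : M, feqP x ∨ feqQ x) ∧
  (∀ x : M, ¬ (feqP x ∧ feqQ x)) ∧
  (∀ x y : M, feqE x y → feqQ x ∧ feqQ y) ∧
  (∀ x : M, feqQ x → feqE x x) ∧
  (∀ x y : M, feqE x y → feqE y x) ∧
  (∀ x y z : M, feqE x y → feqE y z → feqE x z) ∧
  (∀ x z : M, feqR x z → feqQ x ∧ feqP z) ∧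
  (∀ x y z : M, feqR x z → feqR y z → feqE x y → x = y) ∧
  (∀ x z : M, feqQ x → feqP z → feqQ (feqF x z) ∧ feqR (feqF x z) z ∧ feqE x (feqF x z))

end Feq

/-- The theory `T_feq` : the (deductively closed) set of all sentences true in every
structure satisfying the `T_feq` axioms. -/
def Tfeq : Lfeq.Theory :=
  {σ | ∀ (M : Type) (S : Lfeq.Structure M), Nonempty M → @IsFeqStructure M S →
    @Sentence.Realize Lfeq M S σ}

/-- `T'` is the model completion of `T`:  every model of `T'` is a model of `T`; every model
of `T` embeds into a model of `T'`; `T'` is model complete (all embeddings between its models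
are elementary); and `T' ∪ Diag(A)` is complete for every model `A` of `T` (any two models of
`T'` extending a common model of `T` satisfy the same formulas with parameters in it). -/
def IsModelCompletion {L : FirstOrder.Language.{0, 0}} (T T' : L.Theory) : Prop :=
  (∀ N : Theory.ModelType.{0, 0, 0} T', (N : Type) ⊨ T) ∧
  (∀ M : Theory.ModelType.{0, 0, 0} T, ∃ N : Theory.ModelType.{0, 0, 0} T',
      Nonempty ((M : Type) ↪[L] (N : Type))) ∧
  (∀ (M N : Theory.ModelType.{0, 0, 0} T') (f : (M : Type) ↪[L] (N : Type)) (k : ℕ)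
      (ψ : L.Formula (Fin k)) (v : Fin k → M),
      ψ.Realize (f ∘ v) ↔ ψ.Realize v) ∧
  (∀ (A : Theory.ModelType.{0, 0, 0} T) (N₁ N₂ : Theory.ModelType.{0, 0, 0} T')
      (f₁ : (A : Type) ↪[L] (N₁ : Type)) (f₂ : (A : Type) ↪[L] (N₂ : Type)) (k : ℕ)
      (ψ : L.Formula (Fin k)) (v : Fin k → A),
      ψ.Realize (f₁ ∘ v) ↔ ψ.Realize (f₂ ∘ v))

/-- The conjunction of the axioms of `T_feq`, at three given elements. -/
def FeqAxiomsAt (M : Type*) [Lfeq.Structure M] (x y z : M) : Prop :=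
  (feqP x ∨ feqQ x) ∧
  (¬ (feqP x ∧ feqQ x)) ∧
  (feqE x y → feqQ x ∧ feqQ y) ∧
  (feqQ x → feqE x x) ∧
  (feqE x y → feqE y x) ∧
  (feqE x y → feqE y z → feqE x z) ∧
  (feqR x z → feqQ x ∧ feqP z) ∧
  (feqR x z → feqR y z → feqE x y → x = y) ∧
  (feqQ x → feqP z → feqQ (feqF x z) ∧ feqR (feqF x z) z ∧ feqE x (feqF x z))

lemma isFeqStructure_iff {M : Type*} [Lfeq.Structure M] :
    IsFeqStructure M ↔ ∀ x y z : M, FeqAxiomsAt M x y z := by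
  constructor
  · rintro ⟨h1, h2, h3, h4, h5, h6, h7, h8, h9⟩ x y z
    exact ⟨h1 x, h2 x, h3 x y, h4 x, h5 x y, h6 x y z, h7 x z, h8 x y z, h9 x z⟩
  · intro h
    exact ⟨fun x => (h x x x).1, fun x => (h x x x).2.1, fun x y => (h x y x).2.2.1,
      fun x => (h x x x).2.2.2.1, fun x y => (h x y x).2.2.2.2.1,
      fun x y z => (h x y z).2.2.2.2.2.1, fun x z => (h x x z).2.2.2.2.2.2.1,
      fun x y z => (h x y z).2.2.2.2.2.2.2.1, fun x z => (h x x z).2.2.2.2.2.2.2.2⟩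

section Symbols

variable {α : Type*}

/-- The formula `P(t)`. -/
def fmlP (t : Lfeq.Term α) : Lfeq.Formula α := Relations.formula₁ (L := Lfeq) FeqRel.P t

/-- The formula `Q(t)`. -/
def fmlQ (t : Lfeq.Term α) : Lfeq.Formula α := Relations.formula₁ (L := Lfeq) FeqRel.Q t

/-- The formula `E(t, s)`. -/
def fmlE (t s : Lfeq.Term α) : Lfeq.Formula α := Relations.formula₂ (L := Lfeq) FeqRel.E t s

/-- The formula `R(t, s)`. -/
def fmlR (t s : Lfeq.Term α) : Lfeq.Formula α := Relations.formula₂ (L := Lfeq) FeqRel.R t s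

/-- The term `F(t, s)`. -/
def termF (t s : Lfeq.Term α) : Lfeq.Term α := Functions.apply₂ (L := Lfeq) FeqFunc.F t s

variable {M : Type*} [Lfeq.Structure M] {v : α → M} {t s : Lfeq.Term α}

@[simp] lemma realize_fmlP : (fmlP t).Realize v ↔ feqP (t.realize v) := Formula.realize_rel₁

@[simp] lemma realize_fmlQ : (fmlQ t).Realize v ↔ feqQ (t.realize v) := Formula.realize_rel₁

@[simp] lemma realize_fmlE : (fmlE t s).Realize v ↔ feqE (t.realize v) (s.realize v) :=
  Formula.realize_rel₂

@[simp] lemma realize_fmlR : (fmlR t s).Realize v ↔ feqR (t.realize v) (s.realize v) :=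
  Formula.realize_rel₂

@[simp] lemma realize_termF : (termF t s).realize v = feqF (t.realize v) (s.realize v) :=
  Term.realize_functions_apply₂

end Symbols

/-- The conjunction of the axioms of `T_feq` as a quantifier-free formula. -/
def feqAxiomsFormula : Lfeq.Formula (Fin 3) :=
  let x : Lfeq.Term (Fin 3) := .var 0
  let y : Lfeq.Term (Fin 3) := .var 1
  let z : Lfeq.Term (Fin 3) := .var 2
  (fmlP x ⊔ fmlQ x) ⊓
  ((fmlP x ⊓ fmlQ x).not ⊓
  (((fmlE x y).imp (fmlQ x ⊓ fmlQ y)) ⊓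
  (((fmlQ x).imp (fmlE x x)) ⊓
  (((fmlE x y).imp (fmlE y x)) ⊓
  (((fmlE x y).imp ((fmlE y z).imp (fmlE x z))) ⊓
  (((fmlR x z).imp (fmlQ x ⊓ fmlP z)) ⊓
  (((fmlR x z).imp ((fmlR y z).imp ((fmlE x y).imp (x.equal y)))) ⊓
  ((fmlQ x).imp ((fmlP z).imp
    (fmlQ (termF x z) ⊓ (fmlR (termF x z) z ⊓ fmlE x (termF x z))))))))))))

lemma realize_feqAxiomsFormula {M : Type*} [Lfeq.Structure M] (v : Fin 3 → M) :
    feqAxiomsFormula.Realize v ↔ FeqAxiomsAt M (v 0) (v 1) (v 2) := by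
  simp only [feqAxiomsFormula, FeqAxiomsAt, Formula.realize_inf, Formula.realize_sup,
    Formula.realize_imp, Formula.realize_not, Formula.realize_equal, realize_fmlP, realize_fmlQ,
    realize_fmlE, realize_fmlR, realize_termF, Term.realize_var]

/-- The universal closure of the axioms of `T_feq`. -/
noncomputable def feqSentence : Lfeq.Sentence :=
  (feqAxiomsFormula.relabel (Sum.inr : Fin 3 → Empty ⊕ Fin 3)).iAlls (Fin 3)

lemma realize_feqSentence {M : Type*} [Lfeq.Structure M] :
    Sentence.Realize M feqSentence ↔ IsFeqStructure M := by
  rw [feqSentence, Sentence.Realize, Formula.realize_iAlls, isFeqStructure_iff]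
  simp only [Formula.realize_relabel, Sum.elim_comp_inr, realize_feqAxiomsFormula]
  exact ⟨fun h x y z => h ![x, y, z], fun h v => h _ _ _⟩

lemma isFeqStructure_of_models {M : Type} [Lfeq.Structure M] (h : M ⊨ Tfeq) :
    IsFeqStructure M :=
  realize_feqSentence.1 <| h.realize_of_mem _ fun _ S _ hN =>
    letI := S; realize_feqSentence.2 hN

lemma models_of_isFeqStructure {M : Type} [Lfeq.Structure M] [Nonempty M]
    (h : IsFeqStructure M) : M ⊨ Tfeq :=
  ⟨fun _ hσ => hσ M inferInstance inferInstance h⟩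

/-- Compactness over a structure: a family of formulas each finite subfamily of which is realized
in `M` is realized in some structure satisfying all the sentences true in `M`. -/
lemma exists_realize_of_finitely_realized {L : FirstOrder.Language.{0, 0}} {M : Type}
    [L.Structure M] [Nonempty M] {V C : Type} (Φ : C → L.Formula V)
    (h : ∀ s : Finset C, ∃ v : V → M, ∀ c ∈ s, (Φ c).Realize v) :
    ∃ (N : Type) (_ : L.Structure N), Nonempty N ∧
      (∀ σ : L.Sentence, Sentence.Realize M σ → Sentence.Realize N σ) ∧
      ∃ v : V → N, ∀ c, (Φ c).Realize v := by
  classical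
  choose v hv using h
  let U : Ultrafilter (Finset C) := Ultrafilter.of Filter.atTop
  refine ⟨(U : Filter (Finset C)).Product fun _ => M, inferInstance, inferInstance,
    fun σ hσ => ?_, fun w => ((fun s => v s w : Finset C → M) :
      (U : Filter (Finset C)).Product fun _ => M), fun c => ?_⟩
  · exact Ultraproduct.sentence_realize σ |>.2 (Filter.Eventually.of_forall fun _ => hσ)
  · refine (Ultraproduct.realize_formula_cast (Φ c) fun w s => v s w).2 ?_
    refine Ultrafilter.of_le Filter.atTop ?_
    filter_upwards [Filter.eventually_ge_atTop ({c} : Finset C)] with s hs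
    exact hv s c (hs (Finset.mem_singleton_self c))

/-- The `Lfeq`-structure with prescribed interpretations of the symbols. -/
@[reducible] def mkFeqStructure {D : Type} (p q : D → Prop) (e r : D → D → Prop) (f : D → D → D) :
    Lfeq.Structure D where
  funMap g v := match g with
    | FeqFunc.F => f (v 0) (v 1)
  RelMap s v := match s with
    | FeqRel.P => p (v 0)
    | FeqRel.Q => q (v 0)
    | FeqRel.E => e (v 0) (v 1)
    | FeqRel.R => r (v 0) (v 1)

/-- An injection respecting `P`, `Q`, `E`, `R` and `F` is an embedding of `Lfeq`-structures. -/
def feqEmbedding {M N : Type} [Lfeq.Structure M] [Lfeq.Structure N] (f : M → N)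
    (hf : Function.Injective f) (hP : ∀ x, feqP (f x) ↔ feqP x) (hQ : ∀ x, feqQ (f x) ↔ feqQ x)
    (hE : ∀ x y, feqE (f x) (f y) ↔ feqE x y) (hR : ∀ x y, feqR (f x) (f y) ↔ feqR x y)
    (hF : ∀ x y, f (feqF x y) = feqF (f x) (f y)) : M ↪[Lfeq] N where
  toFun := f
  inj' := hf
  map_fun' g v := by
    cases g
    have h1 : v = ![v 0, v 1] := by funext i; fin_cases i <;> rfl
    have h2 : f ∘ v = ![f (v 0), f (v 1)] := by funext i; fin_cases i <;> rfl
    rw [h2, h1]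
    exact hF _ _
  map_rel' s v := by
    cases s
    · have h1 : v = ![v 0] := by funext i; fin_cases i; rfl
      have h2 : f ∘ v = ![f (v 0)] := by funext i; fin_cases i; rfl
      rw [h2, h1]
      exact hP _
    · have h1 : v = ![v 0] := by funext i; fin_cases i; rfl
      have h2 : f ∘ v = ![f (v 0)] := by funext i; fin_cases i; rfl
      rw [h2, h1]
      exact hQ _
    · have h1 : v = ![v 0, v 1] := by funext i; fin_cases i <;> rfl
      have h2 : f ∘ v = ![f (v 0), f (v 1)] := by funext i; fin_cases i <;> rfl
      rw [h2, h1]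
      exact hE _ _
    · have h1 : v = ![v 0, v 1] := by funext i; fin_cases i <;> rfl
      have h2 : f ∘ v = ![f (v 0), f (v 1)] := by funext i; fin_cases i <;> rfl
      rw [h2, h1]
      exact hR _ _

section Glue

variable {N : Type} [Lfeq.Structure N] {ι : Type}

/-- In a model of `T_feq` the value `F(x, z)` depends only on the `E`-class of `x`. -/
lemma feqF_congr (hN : IsFeqStructure N) {x y z : N} (hz : feqP z) (h : feqE x y) :
    feqF x z = feqF y z := by
  obtain ⟨-, -, hEQ, -, hsymm, htrans, -, huniq, hF⟩ := hN
  obtain ⟨-, h1, h2⟩ := hF x z (hEQ _ _ h).1 hz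
  obtain ⟨-, h3, h4⟩ := hF y z (hEQ _ _ h).2 hz
  exact huniq _ _ _ h1 h3 (htrans _ _ _ (hsymm _ _ h2) (htrans _ _ _ h h4))

lemma feqR_iff (hN : IsFeqStructure N) {x z : N} :
    feqR x z ↔ feqQ x ∧ feqP z ∧ feqF x z = x := by
  obtain ⟨-, -, -, hrefl, hsymm, -, hRQ, huniq, hF⟩ := hN
  constructor
  · intro h
    obtain ⟨hx, hz⟩ := hRQ _ _ h
    obtain ⟨-, h1, h2⟩ := hF x z hx hz
    exact ⟨hx, hz, huniq _ _ _ h1 h (hsymm _ _ h2)⟩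
  · rintro ⟨hx, hz, h⟩
    simpa [h] using (hF x z hx hz).2.1

/-- Data for gluing copies of `N` indexed by `ι`: a coherent system of partial isomorphisms `r i j`
from the copy `i` to the copy `j` such that elements of the copies `i` and `k` that become
`E`-equivalent through the copy `j` do so through an element common to all three copies. -/
structure GlueData (N : Type) [Lfeq.Structure N] (ι : Type) where
  r : ι → ι → N → N → Prop
  diag : ∀ i x y, r i i x y ↔ x = y
  symm : ∀ i j x y, r i j x y → r j i y x
  trans : ∀ i j k x y z, r i j x y → r j k y z → r i k x z
  mapP : ∀ i j x y, r i j x y → (feqP x ↔ feqP y)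
  mapQ : ∀ i j x y, r i j x y → (feqQ x ↔ feqQ y)
  mapE : ∀ i j x y x' y', r i j x y → r i j x' y' → feqE x x' → feqE y y'
  mapF : ∀ i j x y x' y', r i j x y → r i j x' y' → r i j (feqF x x') (feqF y y')
  indep : ∀ i j k x y y' z, r i j x y → r j k y' z → feqE y y' →
    ∃ x₀ y₀ z₀, r i j x₀ y₀ ∧ r j k y₀ z₀ ∧ feqE y y₀

namespace GlueData

variable (G : GlueData N ι)

/-- The identifications made by the gluing data. -/
def setoid : Setoid (ι × N) where
  r a b := G.r a.1 b.1 a.2 b.2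
  iseqv := ⟨fun a => (G.diag a.1 _ _).2 rfl, fun h => G.symm _ _ _ _ h,
    fun h₁ h₂ => G.trans _ _ _ _ _ _ h₁ h₂⟩

/-- The glued universe. -/
def Carrier : Type := Quotient G.setoid

/-- The inclusion of the copy `i`. -/
def incl (i : ι) (x : N) : G.Carrier := Quotient.mk G.setoid (i, x)

variable {G}

lemma incl_eq {i j : ι} {x y : N} : G.incl i x = G.incl j y ↔ G.r i j x y := Quotient.eq''

lemma exists_incl (d : G.Carrier) : ∃ i x, d = G.incl i x := by
  obtain ⟨⟨i, x⟩, rfl⟩ := Quotient.exists_rep d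
  exact ⟨i, x, rfl⟩

variable (G)

/-- The predicate `P` on the glued universe. -/
def gP (d : G.Carrier) : Prop := ∃ i x, d = G.incl i x ∧ feqP x

/-- The predicate `Q` on the glued universe. -/
def gQ (d : G.Carrier) : Prop := ∃ i x, d = G.incl i x ∧ feqQ x

/-- The relation `E` on the glued universe. -/
def gE (d d' : G.Carrier) : Prop :=
  ∃ i j x x₁ y y₁, d = G.incl i x ∧ d' = G.incl j y ∧ feqE x x₁ ∧ G.r i j x₁ y₁ ∧ feqE y₁ y

/-- The graph of the part of the function `F` inherited from the copies. -/
def graphF (d d' w : G.Carrier) : Prop :=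
  ∃ i x z, d' = G.incl i z ∧ w = G.incl i (feqF x z) ∧
    ((G.gQ d ∧ G.gP d' ∧ G.gE d (G.incl i x)) ∨ (¬ (G.gQ d ∧ G.gP d') ∧ d = G.incl i x))

open Classical in
/-- The function `F` on the glued universe. -/
noncomputable def gF (d d' : G.Carrier) : G.Carrier :=
  if h : ∃ w, G.graphF d d' w then h.choose else @Classical.epsilon _ ⟨d⟩ (G.gE d)

/-- The relation `R` on the glued universe. -/
def gR (d d' : G.Carrier) : Prop := G.gQ d ∧ G.gP d' ∧ G.gF d d' = d

variable {G}

lemma gP_incl {i : ι} {x : N} : G.gP (G.incl i x) ↔ feqP x :=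
  ⟨fun ⟨_, _, h, hy⟩ => (G.mapP _ _ _ _ (incl_eq.1 h)).2 hy, fun h => ⟨i, x, rfl, h⟩⟩

lemma gQ_incl {i : ι} {x : N} : G.gQ (G.incl i x) ↔ feqQ x :=
  ⟨fun ⟨_, _, h, hy⟩ => (G.mapQ _ _ _ _ (incl_eq.1 h)).2 hy, fun h => ⟨i, x, rfl, h⟩⟩

/-- `E`-equivalence of elements of two copies through a common element. -/
def copyE (G : GlueData N ι) (i j : ι) (x y : N) : Prop :=
  ∃ x' y', feqE x x' ∧ G.r i j x' y' ∧ feqE y' y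

lemma copyE_of_r (hN : IsFeqStructure N) {i j : ι} {x y : N} (h : G.r i j x y) (hx : feqQ x) :
    G.copyE i j x y :=
  ⟨x, y, hN.2.2.2.1 x hx, h, hN.2.2.2.1 y ((G.mapQ _ _ _ _ h).1 hx)⟩

lemma copyE.symm (hN : IsFeqStructure N) {i j : ι} {x y : N} (h : G.copyE i j x y) :
    G.copyE j i y x := by
  obtain ⟨x', y', h1, h2, h3⟩ := h
  exact ⟨y', x', hN.2.2.2.2.1 _ _ h3, G.symm _ _ _ _ h2, hN.2.2.2.2.1 _ _ h1⟩

lemma copyE.trans (hN : IsFeqStructure N) {i j k : ι} {x y z : N} (h : G.copyE i j x y)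
    (h' : G.copyE j k y z) : G.copyE i k x z := by
  obtain ⟨-, -, -, -, hsymm, htrans, -⟩ := hN
  obtain ⟨x', y', h1, h2, h3⟩ := h
  obtain ⟨y'', z', h4, h5, h6⟩ := h'
  have hyy := htrans _ _ _ h3 h4
  obtain ⟨x₀, y₀, z₀, h7, h8, h9⟩ := G.indep _ _ _ _ _ _ _ h2 h5 hyy
  refine ⟨x₀, z₀, htrans _ _ _ h1 ?_, G.trans _ _ _ _ _ _ h7 h8, htrans _ _ _ ?_ h6⟩
  · exact G.mapE _ _ _ _ _ _ (G.symm _ _ _ _ h2) (G.symm _ _ _ _ h7) h9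
  · exact G.mapE _ _ _ _ _ _ h8 h5 (htrans _ _ _ (hsymm _ _ h9) hyy)

lemma gE_incl (hN : IsFeqStructure N) {i j : ι} {x y : N} :
    G.gE (G.incl i x) (G.incl j y) ↔ G.copyE i j x y := by
  refine ⟨?_, fun ⟨x', y', h⟩ => ⟨i, j, x, x', y, y', rfl, rfl, h⟩⟩
  rintro ⟨k, l, u, u', v, v', hu, hv, huu', h, hvv'⟩
  have hxu := G.symm _ _ _ _ (incl_eq.1 hu)
  have hvy := G.symm _ _ _ _ (incl_eq.1 hv)
  have hu : feqQ u := (hN.2.2.1 _ _ huu').1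
  have hv : feqQ v := (hN.2.2.1 _ _ hvv').2
  exact ((copyE_of_r hN hxu hu).symm hN).trans hN (copyE.trans hN ⟨u', v', huu', h, hvv'⟩
    (copyE_of_r hN hvy hv))

lemma gE_incl_self (hN : IsFeqStructure N) {i : ι} {x y : N} :
    G.gE (G.incl i x) (G.incl i y) ↔ feqE x y := by
  rw [gE_incl hN]
  obtain ⟨-, -, hEQ, hrefl, hsymm, htrans, -⟩ := hN
  constructor
  · rintro ⟨x', y', h1, h2, h3⟩
    rw [(G.diag _ _ _).1 h2] at h1
    exact htrans _ _ _ h1 h3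
  · exact fun h => ⟨x, x, hrefl x (hEQ _ _ h).1, (G.diag _ _ _).2 rfl, h⟩

lemma gE_gQ (hN : IsFeqStructure N) {d d' : G.Carrier} (h : G.gE d d') : G.gQ d ∧ G.gQ d' := by
  obtain ⟨i, j, x, x', y, y', rfl, rfl, h1, -, h2⟩ := h
  exact ⟨gQ_incl.2 (hN.2.2.1 _ _ h1).1, gQ_incl.2 (hN.2.2.1 _ _ h2).2⟩

lemma gE_refl (hN : IsFeqStructure N) {d : G.Carrier} (h : G.gQ d) : G.gE d d := by
  obtain ⟨i, x, rfl, hx⟩ := h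
  exact (gE_incl_self hN).2 (hN.2.2.2.1 x hx)

lemma gE_symm (hN : IsFeqStructure N) {d d' : G.Carrier} (h : G.gE d d') : G.gE d' d := by
  obtain ⟨i, x, rfl⟩ := exists_incl d
  obtain ⟨j, y, rfl⟩ := exists_incl d'
  rw [gE_incl hN] at h ⊢
  exact h.symm hN

lemma gE_trans (hN : IsFeqStructure N) {d d' d'' : G.Carrier} (h : G.gE d d')
    (h' : G.gE d' d'') : G.gE d d'' := by
  obtain ⟨i, x, rfl⟩ := exists_incl d
  obtain ⟨j, y, rfl⟩ := exists_incl d'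
  obtain ⟨k, z, rfl⟩ := exists_incl d''
  rw [gE_incl hN] at h h' ⊢
  exact h.trans hN h'

lemma graphF_unique (hN : IsFeqStructure N) {d d' w w' : G.Carrier} (h : G.graphF d d' w)
    (h' : G.graphF d d' w') : w = w' := by
  obtain ⟨i, x, z, hz, rfl, h1⟩ := h
  obtain ⟨j, y, u, hu, rfl, h2⟩ := h'
  have hzu := incl_eq.1 (hz.symm.trans hu)
  rw [incl_eq]
  rcases h1 with ⟨hQ, hP, hE⟩ | ⟨hn, hE⟩
  · rcases h2 with ⟨-, -, hE'⟩ | ⟨hn, -⟩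
    · obtain ⟨x', y', h3, h4, h5⟩ := (gE_incl hN).1 (gE_trans hN (gE_symm hN hE) hE')
      rw [feqF_congr hN (gP_incl.1 (hz ▸ hP)) h3, ← feqF_congr hN (gP_incl.1 (hu ▸ hP)) h5]
      exact G.mapF _ _ _ _ _ _ h4 hzu
    · exact absurd ⟨hQ, hP⟩ hn
  · rcases h2 with ⟨hQ, hP, -⟩ | ⟨-, hE'⟩
    · exact absurd ⟨hQ, hP⟩ hn
    · exact G.mapF _ _ _ _ _ _ (incl_eq.1 (hE.symm.trans hE')) hzu

lemma gF_eq (hN : IsFeqStructure N) {d d' w : G.Carrier} (h : G.graphF d d' w) :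
    G.gF d d' = w := by
  have h' : ∃ w, G.graphF d d' w := ⟨w, h⟩
  rw [gF, dif_pos h']
  exact graphF_unique hN h'.choose_spec h

lemma gF_incl (hN : IsFeqStructure N) {i : ι} {x y : N} :
    G.gF (G.incl i x) (G.incl i y) = G.incl i (feqF x y) := by
  refine gF_eq hN ⟨i, x, y, rfl, rfl, ?_⟩
  by_cases h : G.gQ (G.incl i x) ∧ G.gP (G.incl i y)
  · exact .inl ⟨h.1, h.2, gE_refl hN h.1⟩
  · exact .inr ⟨h, rfl⟩

lemma gE_gF (hN : IsFeqStructure N) {d d' : G.Carrier} (hd : G.gQ d) (hd' : G.gP d') :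
    G.gE d (G.gF d d') := by
  by_cases h : ∃ w, G.graphF d d' w
  · obtain ⟨w, hw⟩ := h
    rw [gF_eq hN hw]
    obtain ⟨i, x, z, rfl, rfl, ⟨-, hP, hE⟩ | ⟨hn, -⟩⟩ := hw
    · refine gE_trans hN hE ((gE_incl_self hN).2 ?_)
      exact (hN.2.2.2.2.2.2.2.2 x z (gQ_incl.1 (gE_gQ hN hE).2) (gP_incl.1 hP)).2.2
    · exact absurd ⟨hd, hd'⟩ hn
  · rw [gF, dif_neg h]
    exact Classical.epsilon_spec (p := G.gE d) ⟨d, gE_refl hN hd⟩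

lemma gF_congr (hN : IsFeqStructure N) {d₁ d₂ d' : G.Carrier} (hd' : G.gP d')
    (h : G.gE d₁ d₂) : G.gF d₁ d' = G.gF d₂ d' := by
  have hQ := gE_gQ hN h
  have hE : G.gE d₁ = G.gE d₂ := funext fun w => propext
    ⟨gE_trans hN (gE_symm hN h), gE_trans hN h⟩
  have hG : ∀ w, G.graphF d₁ d' w ↔ G.graphF d₂ d' w := fun w => by
    simp [graphF, hE, hQ, hd']
  by_cases hw : ∃ w, G.graphF d₁ d' w
  · obtain ⟨w, hw⟩ := hw
    rw [gF_eq hN hw, gF_eq hN ((hG w).1 hw)]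
  · rw [gF, gF, dif_neg hw, dif_neg fun ⟨w, h⟩ => hw ⟨w, (hG w).2 h⟩, hE]

/-- The glued structure. -/
@[reducible] noncomputable def gluedStructure (G : GlueData N ι) : Lfeq.Structure G.Carrier :=
  mkFeqStructure G.gP G.gQ G.gE G.gR G.gF

lemma gluedStructure_isFeqStructure (hN : IsFeqStructure N) :
    @IsFeqStructure G.Carrier G.gluedStructure := by
  refine ⟨fun d => ?_, fun d => ?_, fun d d' h => gE_gQ hN h, fun d h => gE_refl hN h,
    fun d d' h => gE_symm hN h, fun d d' d'' h h' => gE_trans hN h h',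
    fun d d' h => ⟨h.1, h.2.1⟩, fun d₁ d₂ d' h₁ h₂ h => ?_, fun d d' hd hd' => ?_⟩
  · obtain ⟨i, x, rfl⟩ := exists_incl d
    exact (hN.1 x).imp gP_incl.2 gQ_incl.2
  · obtain ⟨i, x, rfl⟩ := exists_incl d
    exact fun h => hN.2.1 x ⟨gP_incl.1 h.1, gQ_incl.1 h.2⟩
  · exact h₁.2.2.symm.trans ((gF_congr hN h₁.2.1 h).trans h₂.2.2)
  · have hE := gE_gF hN hd hd'
    exact ⟨(gE_gQ hN hE).2, ⟨(gE_gQ hN hE).2, hd', (gF_congr hN hd' hE).symm⟩, hE⟩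

/-- Gluing copies of a model of `T_feq` yields a model of `T_feq` in which all the copies
embed. -/
lemma exists_glued (G : GlueData N ι) (hN : IsFeqStructure N) :
    ∃ (D : Type) (_ : Lfeq.Structure D) (f : ι → N ↪[Lfeq] D), IsFeqStructure D ∧
      ∀ i j x y, G.r i j x y → f i x = f j y := by
  let _ := G.gluedStructure
  refine ⟨G.Carrier, inferInstance, fun i => feqEmbedding (G.incl i)
    (fun x y h => (G.diag _ _ _).1 (incl_eq.1 h)) (fun x => gP_incl) (fun x => gQ_incl)
    (fun x y => gE_incl_self hN) (fun x y => ?_) (fun x y => (gF_incl hN).symm),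
    gluedStructure_isFeqStructure hN, fun i j x y h => incl_eq.2 h⟩
  rw [feqR_iff hN, feqR_iff (gluedStructure_isFeqStructure hN)]
  refine and_congr gQ_incl (and_congr gP_incl ?_)
  change G.gF (G.incl i x) (G.incl i y) = G.incl i x ↔ _
  rw [gF_incl hN, incl_eq, G.diag]

end GlueData

end Glue

/-- Equality (`true`) or the relation `E` (`false`). -/
def eqOrE {M : Type*} [Lfeq.Structure M] : Bool → M → M → Prop
  | true => Eq
  | false => feqE

lemma eqOrE_symm {M : Type*} [Lfeq.Structure M] (hM : IsFeqStructure M) (b : Bool) {x y : M}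
    (h : eqOrE b x y) : eqOrE b y x := by
  cases b
  · exact hM.2.2.2.2.1 _ _ h
  · exact Eq.symm h

lemma eqOrE_trans {M : Type*} [Lfeq.Structure M] (hM : IsFeqStructure M) (b : Bool) {x y z : M}
    (h : eqOrE b x y) (h' : eqOrE b y z) : eqOrE b x z := by
  cases b
  · exact hM.2.2.2.2.2.1 _ _ _ h h'
  · exact Eq.trans h h'

section Triangle

variable {N : Type} [Lfeq.Structure N] {X : Type} {U : Fin 3 → Type}

/-- Three copies of a model of `T_feq`, the copy `i` containing tuples `u i k` for the two
vertices `k ≠ i`. If the two occurrences of each vertex have the same quantifier-free type over the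
tuple `x`, and the two vertices occurring in a copy generate over `x` substructures which are
independent over the one generated by `x`, then the three copies can be amalgamated over the
vertices. -/
lemma exists_triangle (hN : IsFeqStructure N) (x : X → N) (u : (i k : Fin 3) → U k → N)
    (hP : ∀ i j k, k ≠ i → k ≠ j → ∀ t : Lfeq.Term (X ⊕ U k),
      feqP (t.realize (Sum.elim x (u i k))) → feqP (t.realize (Sum.elim x (u j k))))
    (hQ : ∀ i j k, k ≠ i → k ≠ j → ∀ t : Lfeq.Term (X ⊕ U k),
      feqQ (t.realize (Sum.elim x (u i k))) → feqQ (t.realize (Sum.elim x (u j k))))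
    (hE : ∀ b i j k, k ≠ i → k ≠ j → ∀ t s : Lfeq.Term (X ⊕ U k),
      eqOrE b (t.realize (Sum.elim x (u i k))) (s.realize (Sum.elim x (u i k))) →
        eqOrE b (t.realize (Sum.elim x (u j k))) (s.realize (Sum.elim x (u j k))))
    (hind : ∀ b i k l, k ≠ l → k ≠ i → l ≠ i → ∀ (t : Lfeq.Term (X ⊕ U k))
      (s : Lfeq.Term (X ⊕ U l)),
      eqOrE b (t.realize (Sum.elim x (u i k))) (s.realize (Sum.elim x (u i l))) →
        ∃ τ : Lfeq.Term X, eqOrE b (t.realize (Sum.elim x (u i k))) (τ.realize x)) :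
    ∃ (D : Type) (_ : Lfeq.Structure D) (f : Fin 3 → N ↪[Lfeq] D), IsFeqStructure D ∧
      ∀ i j k, k ≠ i → k ≠ j → ∀ a, f i (u i k a) = f j (u j k a) := by
  have base : ∀ (τ : Lfeq.Term X) i k,
      (τ.relabel (Sum.inl : X → X ⊕ U k)).realize (Sum.elim x (u i k)) = τ.realize x := by
    intro τ i k
    rw [Term.realize_relabel, Sum.elim_comp_inl]
  let r : Fin 3 → Fin 3 → N → N → Prop := fun i j y z => (i = j ∧ y = z) ∨
    ∃ k, k ≠ i ∧ k ≠ j ∧ ∃ t : Lfeq.Term (X ⊕ U k),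
      y = t.realize (Sum.elim x (u i k)) ∧ z = t.realize (Sum.elim x (u j k))
  have third : ∀ i j : Fin 3, ∃ k, k ≠ i ∧ k ≠ j := by decide
  have third_unique : ∀ i j k l : Fin 3, i ≠ j → k ≠ i → k ≠ j → l ≠ i → l ≠ j → k = l := by
    decide
  have r_base : ∀ i j (τ : Lfeq.Term X), r i j (τ.realize x) (τ.realize x) := by
    intro i j τ
    obtain ⟨k, hki, hkj⟩ := third i j
    exact .inr ⟨k, hki, hkj, τ.relabel Sum.inl, (base _ _ _).symm, (base _ _ _).symm⟩
  have r_diag : ∀ i y z, r i i y z ↔ y = z := by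
    refine fun i y z => ⟨?_, fun h => .inl ⟨rfl, h⟩⟩
    rintro (⟨-, h⟩ | ⟨k, -, -, t, rfl, rfl⟩)
    · exact h
    · rfl
  have r_cases : ∀ i j y z y' z', r i j y z → r i j y' z' → (i = j ∧ y = z ∧ y' = z') ∨
      ∃ k, k ≠ i ∧ k ≠ j ∧ ∃ t s : Lfeq.Term (X ⊕ U k),
      y = t.realize (Sum.elim x (u i k)) ∧ z = t.realize (Sum.elim x (u j k)) ∧
      y' = s.realize (Sum.elim x (u i k)) ∧ z' = s.realize (Sum.elim x (u j k)) := by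
    intro i j y z y' z' h h'
    by_cases hij : i = j
    · subst hij
      exact .inl ⟨rfl, (r_diag _ _ _).1 h, (r_diag _ _ _).1 h'⟩
    · obtain ⟨h, -⟩ | ⟨k, hki, hkj, t, hy, hz⟩ := h
      · exact absurd h hij
      obtain ⟨h, -⟩ | ⟨l, hli, hlj, s, hy', hz'⟩ := h'
      · exact absurd h hij
      obtain rfl := third_unique i j k l hij hki hkj hli hlj
      exact .inr ⟨k, hki, hkj, t, s, hy, hz, hy', hz'⟩
  have hQE : ∀ {y z : N}, feqE y z → feqE y y := fun h => hN.2.2.2.1 _ (hN.2.2.1 _ _ h).1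
  let G : GlueData N (Fin 3) :=
    { r := r
      diag := r_diag
      symm := by
        rintro i j y z (⟨rfl, rfl⟩ | ⟨k, hki, hkj, t, hy, hz⟩)
        · exact .inl ⟨rfl, rfl⟩
        · exact .inr ⟨k, hkj, hki, t, hz, hy⟩
      trans := by
        rintro i j l y z w (⟨rfl, rfl⟩ | ⟨k, hki, hkj, t, rfl, rfl⟩) h
        · exact h
        obtain ⟨rfl, rfl⟩ | ⟨k', hkj', hkl', s, hz, rfl⟩ := h
        · exact .inr ⟨k, hki, hkj, t, rfl, rfl⟩
        by_cases hkk : k = k'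
        · subst hkk
          exact .inr ⟨k, hki, hkl', s, hE true j i k hkj hki t s hz, rfl⟩
        · obtain ⟨τ, hτ⟩ := hind true j k k' hkk hkj hkj' t s hz
          have h1 := hE true j i k hkj hki t (τ.relabel Sum.inl) (hτ.trans (base _ _ _).symm)
          have h2 := hE true j l k' hkj' hkl' s (τ.relabel Sum.inl)
            (hz.symm.trans (hτ.trans (base _ _ _).symm))
          rw [h1.trans (base _ _ _), h2.trans (base _ _ _)]
          exact r_base _ _ _
      mapP := by
        rintro i j y z (⟨rfl, rfl⟩ | ⟨k, hki, hkj, t, rfl, rfl⟩)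
        · rfl
        · exact ⟨hP i j k hki hkj t, hP j i k hkj hki t⟩
      mapQ := by
        rintro i j y z (⟨rfl, rfl⟩ | ⟨k, hki, hkj, t, rfl, rfl⟩)
        · rfl
        · exact ⟨hQ i j k hki hkj t, hQ j i k hkj hki t⟩
      mapE := by
        intro i j y z y' z' h h'
        obtain ⟨rfl, rfl, rfl⟩ | ⟨k, hki, hkj, t, s, rfl, rfl, rfl, rfl⟩ := r_cases _ _ _ _ _ _ h h'
        · exact id
        · exact hE false i j k hki hkj t s
      mapF := by
        intro i j y z y' z' h h'
        obtain ⟨rfl, rfl, rfl⟩ | ⟨k, hki, hkj, t, s, rfl, rfl, rfl, rfl⟩ := r_cases _ _ _ _ _ _ h h'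
        · exact .inl ⟨rfl, rfl⟩
        · exact .inr ⟨k, hki, hkj, termF t s, realize_termF.symm, realize_termF.symm⟩
      indep := by
        rintro i j l y z z' w (⟨rfl, rfl⟩ | ⟨k, hki, hkj, t, rfl, rfl⟩) h hzz
        · exact ⟨z', z', w, .inl ⟨rfl, rfl⟩, h, hzz⟩
        obtain ⟨rfl, rfl⟩ | ⟨k', hkj', hkl', s, rfl, rfl⟩ := h
        · exact ⟨_, _, _, .inr ⟨k, hki, hkj, t, rfl, rfl⟩, .inl ⟨rfl, rfl⟩, hQE hzz⟩
        by_cases hkk : k = k'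
        · subst hkk
          exact ⟨_, _, _, .inr ⟨k, hki, hkj, t, rfl, rfl⟩, .inr ⟨k, hkj, hkl', t, rfl, rfl⟩, hQE hzz⟩
        · obtain ⟨τ, hτ⟩ := hind false j k k' hkk hkj hkj' t s hzz
          exact ⟨_, _, _, r_base _ _ τ, r_base _ _ τ, hτ⟩ }
  obtain ⟨D, S, f, hD, hf⟩ := G.exists_glued hN
  exact ⟨D, S, f, hD, fun i j k hki hkj a => hf _ _ _ _
    (.inr ⟨k, hki, hkj, .var (.inr a), rfl, rfl⟩)⟩

end Triangle

section Array

lemma isPrefix_of_step {η : ℕ → List Bool} (h : ∀ i, η i <+: η (i + 1)) {i j : ℕ} (hij : i ≤ j) :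
    η i <+: η j := by
  induction hij with
  | refl => exact List.prefix_rfl
  | step _ ih => exact ih.trans (h _)

lemma exists_sibling_pair {ι : Type} [Finite ι] (pr : ι → List Bool → Prop) (η : List Bool) :
    ∃ z η' : List Bool, η <+: η' ∧ z.length ≤ η'.length ∧
      (∃ ν, z = ν ++ [true] ∧ ν ++ [false] <+: η') ∧ ∀ t, pr t z ↔ pr t η' := by
  obtain ⟨α, α', hne, h⟩ := Finite.exists_ne_map_eq_of_infinite
    fun (α : ℕ) (t : ι) => pr t (η ++ List.replicate α false ++ [true])
  wlog hlt : α < α' generalizing α α'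
  · exact this α' α hne.symm h.symm (by omega)
  obtain ⟨k, rfl⟩ : ∃ k, α' = α + 1 + k := ⟨α' - (α + 1), by omega⟩
  refine ⟨_, η ++ List.replicate (α + 1 + k) false ++ [true], ?_, ?_, ⟨_, rfl, ?_⟩,
    fun t => iff_of_eq (congrFun h t)⟩
  · rw [List.append_assoc]
    exact List.prefix_append _ _
  · simp only [List.length_append, List.length_replicate, List.length_singleton]
    omega
  · rw [List.replicate_add, List.replicate_add, List.replicate_one]
    exact ⟨List.replicate k false ++ [true], by simp only [List.append_assoc]⟩

/-- In a binary tree with finitely many tests at each level there are a branch and siblings of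
initial segments of this branch which pass the same tests. -/
lemma exists_branch_with_siblings {ι : ℕ → Type} [∀ l, Finite (ι l)]
    (pr : ∀ l, ι l → List Bool → Prop) :
    ∃ η z : ℕ → List Bool, (∀ i j, i ≤ j → η i <+: η j) ∧
      (∀ i, (z i).length ≤ (η (i + 1)).length) ∧
      (∀ i j, i < j → ∃ ν, z i = ν ++ [true] ∧ ν ++ [false] <+: η j) ∧
      ∀ i t, pr (η i).length t (z i) ↔ pr (η i).length t (η (i + 1)) := by
  choose Z H hH hlen hν hpr using fun η : List Bool => exists_sibling_pair (pr η.length) η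
  let η : ℕ → List Bool := fun i => Nat.rec [] (fun _ => H) i
  have hη : ∀ i j, i ≤ j → η i <+: η j := fun i j => isPrefix_of_step fun i => hH (η i)
  refine ⟨η, fun i => Z (η i), hη, fun i => hlen (η i), fun i j hij => ?_, fun i => hpr (η i)⟩
  obtain ⟨ν, h1, h2⟩ := hν (η i)
  exact ⟨ν, h1, h2.trans (hη (i + 1) j hij)⟩

lemma restrict_eq_of_isPrefix {ρ : ℕ → Bool} {ζ η : List Bool} (h : ζ <+: η)
    (hρ : ∀ n, ρ n = η.getD n false) : restrict ρ ζ.length = ζ := by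
  refine List.ext_getElem (by simp [restrict]) fun n h1 h2 => ?_
  have h3 := h.length_le
  simp only [restrict, List.getElem_ofFn, hρ]
  rw [List.getD_eq_getElem _ _ (by omega)]
  exact (h.getElem h2).symm

/-- A colouring of increasing triples by finitely many colours depends, on a suitable subsequence,
only on the first and the last entries, the middle one being arbitrary. -/
lemma exists_strictMono_color_eq {K : ℕ → Type} [∀ m, Finite (K m)]
    (col : (m : ℕ) → ℕ → ℕ → K m) :
    ∃ g : ℕ → ℕ, StrictMono g ∧ ∀ m a b c, m < a → a < b → b < c →
      col (g m) (g a) (g c) = col (g m) (g b) (g c) := by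
  let U : Ultrafilter ℕ := Filter.hyperfilter ℕ
  have key : ∀ {κ : Type} [Finite κ] (f : ℕ → κ), ∃ k, ∀ᶠ n in (U : Filter ℕ), f n = k := by
    intro κ _ f
    obtain ⟨k, hk⟩ := (U.map f).eq_pure_of_finite
    refine ⟨k, ?_⟩
    have : ({k} : Set κ) ∈ U.map f := by rw [hk]; exact rfl
    exact this
  choose lim1 hlim1 using fun m a => key (col m a)
  choose lim2 hlim2 using fun m => key (lim1 m)
  have step : ∀ n, ∃ n', n < n' ∧ (∀ m ≤ n, ∀ a ≤ n, col m a n' = lim1 m a) ∧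
      ∀ m ≤ n, lim1 m n' = lim2 m := by
    intro n
    have h1 : ∀ᶠ n' in (U : Filter ℕ), n < n' := by
      have : ∀ᶠ n' in Filter.cofinite, n < n' := by
        rw [Nat.cofinite_eq_atTop]; exact Filter.eventually_gt_atTop n
      exact Filter.hyperfilter_le_cofinite this
    have h2 : ∀ᶠ n' in (U : Filter ℕ), ∀ m ∈ Set.Iic n, ∀ a ∈ Set.Iic n, col m a n' = lim1 m a :=
      (Filter.eventually_all_finite (Set.finite_Iic n)).2 fun m _ =>
        (Filter.eventually_all_finite (Set.finite_Iic n)).2 fun a _ => hlim1 m a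
    have h3 : ∀ᶠ n' in (U : Filter ℕ), ∀ m ∈ Set.Iic n, lim1 m n' = lim2 m :=
      (Filter.eventually_all_finite (Set.finite_Iic n)).2 fun m _ => hlim2 m
    obtain ⟨n', h⟩ := (h1.and (h2.and h3)).exists
    exact ⟨n', h⟩
  choose nx hnx hcol hlim using step
  let g : ℕ → ℕ := fun i => Nat.rec 0 (fun _ => nx) i
  have hg : StrictMono g := strictMono_nat_of_lt_succ fun i => hnx (g i)
  have hc : ∀ m a c, m < a → a < c → col (g m) (g a) (g c) = lim2 (g m) := by
    intro m a c hma hac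
    obtain ⟨a, rfl⟩ := Nat.exists_eq_succ_of_ne_zero (Nat.ne_zero_of_lt hma)
    obtain ⟨c, rfl⟩ := Nat.exists_eq_succ_of_ne_zero (Nat.ne_zero_of_lt hac)
    have hmc := hg.monotone (show m ≤ c by omega)
    have hac := hg.monotone (show a + 1 ≤ c by omega)
    have hma := hg.monotone (show m ≤ a by omega)
    exact (hcol (g c) _ hmc _ hac).trans (hlim (g a) _ hma)
  exact ⟨g, hg, fun m a b c hma hab hbc => (hc m a c hma (hab.trans hbc)).trans
    (hc m b c (hma.trans hab) hbc).symm⟩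

end Array

/-- Given finitely many families of tests `P₂` and `P₄`, a binary tree contains an array of pairs of
nodes in which the two entries of each pair are not distinguished by `P₂` over the earlier pairs,
and the middle pairs are not distinguished by `P₄`. -/
lemma exists_coherent_array {β Δ : Type} [Finite Δ] (a : List Bool → β) (n : Δ → ℕ)
    (P₂ : (d : Δ) → (Fin (n d) → Bool → β) → β → Prop)
    (P₄ : (d : Δ) → (Fin (n d) → Bool → β) → (Bool → β) → (Bool → β) → Prop) :
    ∃ ν : ℕ → Bool → List Bool, (∀ i j, i ≤ j → ν i false <+: ν j false) ∧
      (∀ i j, i < j → ∃ μ, ν i true = μ ++ [true] ∧ μ ++ [false] <+: ν j false) ∧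
      (∀ d (ζ : Fin (n d) → ℕ) i, (∀ u, ζ u < i) →
        (P₂ d (fun u b => a (ν (ζ u) b)) (a (ν i false)) ↔
          P₂ d (fun u b => a (ν (ζ u) b)) (a (ν i true)))) ∧
      ∀ d (ζ : Fin (n d) → ℕ) m i j k, (∀ u, ζ u ≤ m) → m < i → i < j → j < k →
        (P₄ d (fun u b => a (ν (ζ u) b)) (fun b => a (ν i b)) (fun b => a (ν k b)) ↔
          P₄ d (fun u b => a (ν (ζ u) b)) (fun b => a (ν j b)) (fun b => a (ν k b))) := by
  have (l : ℕ) : Finite {s : List Bool // s.length ≤ l} := List.finite_length_le Bool l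
  obtain ⟨η, z, hη, hz, hinc, hpr⟩ := exists_branch_with_siblings
    (ι := fun l => Σ d : Δ, Fin (n d) → Bool → {s : List Bool // s.length ≤ l})
    fun _ t s => P₂ t.1 (fun u b => a (t.2 u b)) (a s)
  let A : ℕ → Bool → List Bool := fun i b => if b then z i else η (i + 1)
  have hlen : ∀ i j b, i < j → (A i b).length ≤ (η j).length := by
    intro i j b hij
    have h := (hη (i + 1) j hij).length_le
    cases b
    · exact h
    · exact (hz i).trans h
  obtain ⟨g, hg, hcol⟩ := exists_strictMono_color_eq
    (K := fun m => (Σ d : Δ, Fin (n d) → Fin (m + 1)) → Prop)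
    fun _ i k t => P₄ t.1 (fun u b => a (A (t.2 u) b)) (fun b => a (A i b)) (fun b => a (A k b))
  refine ⟨fun i => A (g i), fun i j hij => hη _ _ (Nat.succ_le_succ (hg.monotone hij)),
    fun i j hij => hinc _ _ ((hg hij).trans (Nat.lt_succ_self _)), fun d ζ i hζ => ?_,
    fun d ζ m i j k hζ hmi hij hjk => ?_⟩
  · exact (hpr (g i) ⟨d, fun u b => ⟨A (g (ζ u)) b, hlen _ _ _ (hg (hζ u))⟩⟩).symm
  · exact iff_of_eq (congrFun (hcol m i j k hmi hij hjk)
      ⟨d, fun u => ⟨g (ζ u), Nat.lt_succ_of_le (hg.monotone (hζ u))⟩⟩)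

section Coherent

variable {L : FirstOrder.Language.{0, 0}} {mx my : ℕ}

/-- A pair of formulas used as tests on the arrays of pairs of `my`-tuples. -/
structure TestPair (L : FirstOrder.Language.{0, 0}) (my : ℕ) where
  /-- the number of parameters used -/
  n : ℕ
  /-- a test on a tuple -/
  single : L.Formula ((Fin n × Bool × Fin my) ⊕ Fin my)
  /-- a test on two pairs of tuples -/
  double : L.Formula ((Fin n × Bool × Fin my) ⊕ ((Bool × Fin my) ⊕ (Bool × Fin my)))

/-- The test `d.single` at the tuple `y` over the array `c`. -/
def TestPair.Single (d : TestPair L my) {M : Type} [L.Structure M]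
    (c : Fin d.n → Bool → Fin my → M) (y : Fin my → M) : Prop :=
  d.single.Realize (Sum.elim (fun w => c w.1 w.2.1 w.2.2) y)

/-- The test `d.double` at the pairs `y`, `y'` over the array `c`. -/
def TestPair.Double (d : TestPair L my) {M : Type} [L.Structure M]
    (c : Fin d.n → Bool → Fin my → M) (y y' : Bool → Fin my → M) : Prop :=
  d.double.Realize (Sum.elim (fun w => c w.1 w.2.1 w.2.2)
    (Sum.elim (fun w => y w.1 w.2) fun w => y' w.1 w.2))

/-- The relation between a tuple `e` and an array `c` of pairs of tuples, at `p` and `q` and for the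
tests `d`, required by `exists_coherent_family`. -/
def Coherent {I M : Type} [L.Structure M] (φ : L.Formula (Fin mx ⊕ Fin my)) (d : TestPair L my)
    (s : ℕ → I) (p q : I) (e : Fin mx → M) (c : I → Bool → Fin my → M) : Prop :=
  φ.Realize (Sum.elim e (c p false)) ∧
  (¬ ∃ e' : Fin mx → M, φ.Realize (Sum.elim e' (c q false)) ∧
    φ.Realize (Sum.elim e' (c p true))) ∧
  (d.Single (fun u => c (s u)) (c p false) ↔ d.Single (fun u => c (s u)) (c p true)) ∧
  (d.Double (fun u => c (s u)) (c (s d.n)) (c q) ↔ d.Double (fun u => c (s u)) (c p) (c q))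

/-- The formula stating that `φ(x̄, ȳ)` and `φ(x̄, z̄)` have a common solution `x̄`. -/
noncomputable def compatFormula (φ : L.Formula (Fin mx ⊕ Fin my)) : L.Formula (Fin my ⊕ Fin my) :=
  Formula.iExs (Fin mx) (φ.relabel (Sum.elim .inr fun l => .inl (.inl l)) ⊓
    φ.relabel (Sum.elim .inr fun l => .inl (.inr l)))

lemma realize_compatFormula {M : Type} [L.Structure M] {φ : L.Formula (Fin mx ⊕ Fin my)}
    {y z : Fin my → M} : (compatFormula φ).Realize (Sum.elim y z) ↔
      ∃ e : Fin mx → M, φ.Realize (Sum.elim e y) ∧ φ.Realize (Sum.elim e z) := by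
  simp only [compatFormula, Formula.realize_iExs, Formula.realize_inf, Formula.realize_relabel]
  refine exists_congr fun e => and_congr (iff_of_eq (congrArg _ ?_)) (iff_of_eq (congrArg _ ?_)) <;>
  · ext (i | i) <;> rfl

/-- The formula defining `Coherent`. -/
noncomputable def coherentFormula {I : Type} (φ : L.Formula (Fin mx ⊕ Fin my)) (d : TestPair L my)
    (s : ℕ → I) (p q : I) : L.Formula (Fin mx ⊕ (I × Bool × Fin my)) :=
  let f : Fin d.n × Bool × Fin my → Fin mx ⊕ (I × Bool × Fin my) := fun w => .inr (s w.1, w.2)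
  let h (b : Bool) : L.Formula (Fin mx ⊕ (I × Bool × Fin my)) :=
    d.single.relabel (Sum.elim f fun l => .inr (p, b, l))
  let k (r : I) : L.Formula (Fin mx ⊕ (I × Bool × Fin my)) :=
    d.double.relabel (Sum.elim f (Sum.elim (fun w => .inr (r, w)) fun w => .inr (q, w)))
  φ.relabel (Sum.map id fun l => (p, false, l)) ⊓
  (((compatFormula φ).relabel
      (Sum.elim (fun l => .inr (q, false, l)) fun l => .inr (p, true, l))).not ⊓
    ((h false).iff (h true) ⊓ (k (s d.n)).iff (k p)))

lemma realize_coherentFormula {I M : Type} [L.Structure M] (φ : L.Formula (Fin mx ⊕ Fin my))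
    (d : TestPair L my) (s : ℕ → I) (p q : I) (e : Fin mx → M) (c : I → Bool → Fin my → M) :
    (coherentFormula φ d s p q).Realize (Sum.elim e fun w => c w.1 w.2.1 w.2.2) ↔
      Coherent φ d s p q e c := by
  simp only [coherentFormula, Coherent, TestPair.Single, TestPair.Double, Formula.realize_inf,
    Formula.realize_not, Formula.realize_iff, Formula.realize_relabel]
  have e1 : (Sum.elim e fun w : I × Bool × Fin my => c w.1 w.2.1 w.2.2) ∘
      Sum.map id (fun l => (p, false, l)) = Sum.elim e (c p false) := by
    ext (i | i) <;> rfl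
  have e2 (b : Bool) : (Sum.elim e fun w : I × Bool × Fin my => c w.1 w.2.1 w.2.2) ∘
      Sum.elim (fun w : Fin d.n × Bool × Fin my => .inr (s w.1, w.2)) (fun l => .inr (p, b, l)) =
      Sum.elim (fun w => c (s w.1) w.2.1 w.2.2) (c p b) := by
    ext (i | i) <;> rfl
  have e3 (r : I) : (Sum.elim e fun w : I × Bool × Fin my => c w.1 w.2.1 w.2.2) ∘
      Sum.elim (fun w : Fin d.n × Bool × Fin my => .inr (s w.1, w.2))
        (Sum.elim (fun w => .inr (r, w)) (fun w => .inr (q, w))) =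
      Sum.elim (fun w => c (s w.1) w.2.1 w.2.2)
        (Sum.elim (fun w => c r w.1 w.2) fun w => c q w.1 w.2) := by
    ext (i | i | i) <;> rfl
  have e4 : (Sum.elim e fun w : I × Bool × Fin my => c w.1 w.2.1 w.2.2) ∘
      Sum.elim (fun l => .inr (q, false, l)) (fun l => .inr (p, true, l)) =
      Sum.elim (c q false) (c p true) := by
    ext (i | i) <;> rfl
  simp only [e1, e2, e3, e4, realize_compatFormula]

/-- From a tree witnessing SOP₁ one obtains, in a structure with the same theory, a family of pairs
of tuples indexed by `ℕ ⊕ ℝ` whose members indexed by reals are similar to each other over the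
members indexed by natural numbers. -/
lemma exists_coherent_family {M : Type} [L.Structure M] [Nonempty M]
    (φ : L.Formula (Fin mx ⊕ Fin my)) (hφ : ExemplifiesSOP1 φ M) :
    ∃ (N : Type) (_ : L.Structure N), Nonempty N ∧
      (∀ σ : L.Sentence, Sentence.Realize M σ → Sentence.Realize N σ) ∧
      ∃ (e : Fin mx → N) (c : ℕ ⊕ ℝ → Bool → Fin my → N),
        ∀ (d : TestPair L my) (p q : ℝ), p < q → Coherent φ d .inl (.inr p) (.inr q) e c := by
  classical
  obtain ⟨a, hbr, hinc⟩ := hφ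
  suffices h : ∀ s : Finset (TestPair L my × {r : ℝ × ℝ // r.1 < r.2}),
      ∃ v : Fin mx ⊕ ((ℕ ⊕ ℝ) × Bool × Fin my) → M, ∀ t ∈ s,
        (coherentFormula φ t.1 Sum.inl (.inr t.2.1.1) (.inr t.2.1.2)).Realize v by
    obtain ⟨N, S, hne, hN, v, hv⟩ := exists_realize_of_finitely_realized _ h
    refine ⟨N, S, hne, hN, v ∘ .inl, fun p b l => v (.inr (p, b, l)), fun d p q hpq => ?_⟩
    rw [← realize_coherentFormula]
    convert hv (d, ⟨(p, q), hpq⟩) using 1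
    ext (i | i) <;> rfl
  intro s
  obtain ⟨ν, h1, h2, h3, h4⟩ := exists_coherent_array a (fun d : s => d.1.1.n)
    (fun d => d.1.1.Single) fun d => d.1.1.Double
  let B : ℕ := s.sup fun t => t.1.n
  let S : Finset ℝ := s.image (fun t => t.2.1.1) ∪ s.image (fun t => t.2.1.2)
  let pos : ℕ ⊕ ℝ → ℕ := Sum.elim Nat.succ fun r => B + 2 + (S.filter (· < r)).card
  have hpos : ∀ p q : ℝ, p ∈ S → p < q → pos (.inr p) < pos (.inr q) := by
    intro p q hp hpq
    refine Nat.add_lt_add_left (Finset.card_lt_card ?_) _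
    refine Finset.ssubset_iff_subset_ne.2 ⟨fun r hr => ?_, fun h => ?_⟩
    · simp only [Finset.mem_filter] at hr ⊢
      exact ⟨hr.1, hr.2.trans hpq⟩
    · have : p ∈ S.filter (· < q) := by simp [hp, hpq]
      rw [← h] at this
      simp at this
  let m : ℕ := B + 2 + S.card
  obtain ⟨e, he⟩ := hbr fun n => (ν m false).getD n false
  refine ⟨Sum.elim e fun w => a (ν (pos w.1) w.2.1) w.2.2, fun t ht => ?_⟩
  refine (realize_coherentFormula φ t.1 Sum.inl (.inr t.2.1.1) (.inr t.2.1.2) e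
    fun w b => a (ν (pos w) b)).2 ?_
  have hp : t.2.1.1 ∈ S :=
    Finset.mem_union_left _ (Finset.mem_image_of_mem (fun t => t.2.1.1) ht)
  have hB : t.1.n ≤ B := Finset.le_sup (f := fun t => t.1.n) ht
  have hpq := hpos _ _ hp t.2.2
  have hBp : B + 1 < pos (.inr t.2.1.1) := by
    show B + 1 < B + 2 + _
    omega
  refine ⟨?_, ?_, ?_, ?_⟩
  · have hle : pos (.inr t.2.1.1) ≤ m :=
      Nat.add_le_add_left (Finset.card_le_card (Finset.filter_subset _ _)) _
    have := he (ν (pos (.inr t.2.1.1)) false).length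
    rwa [restrict_eq_of_isPrefix (h1 _ _ hle) fun _ => rfl] at this
  · obtain ⟨μ, hμ, hμ'⟩ := h2 _ _ hpq
    simp only [hμ]
    exact hinc μ _ hμ'
  · refine h3 ⟨t, ht⟩ (fun u => u + 1) _ fun u => ?_
    have : (u : ℕ) < t.1.n := u.2
    omega
  · refine h4 ⟨t, ht⟩ (fun u => u + 1) t.1.n (t.1.n + 1) _ _ (fun u => u.2)
      (Nat.lt_succ_self _) ?_ hpq
    omega

end Coherent

lemma exists_term_over_fin {L : FirstOrder.Language.{0, 0}} {W U : Type}
    (t : L.Term ((ℕ × W) ⊕ U)) :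
    ∃ n₀, ∀ n, n₀ ≤ n → ∃ t' : L.Term ((Fin n × W) ⊕ U), ∀ (M : Type) [L.Structure M]
      (x : ℕ × W → M) (z : U → M),
      t'.realize (Sum.elim (fun w => x (w.1, w.2)) z) = t.realize (Sum.elim x z) := by
  induction t with
  | var a =>
    obtain ⟨k, w⟩ | u := a
    · exact ⟨k + 1, fun n hn => ⟨.var (.inl (⟨k, hn⟩, w)), fun _ _ _ _ => rfl⟩⟩
    · exact ⟨0, fun n _ => ⟨.var (.inr u), fun _ _ _ _ => rfl⟩⟩
  | func f ts ih =>
    choose n₀ h using ih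
    refine ⟨Finset.univ.sup n₀, fun n hn => ?_⟩
    choose t' ht' using fun i => h i n ((Finset.le_sup (Finset.mem_univ i)).trans hn)
    refine ⟨.func f t', fun M _ x z => ?_⟩
    simp only [ht', Term.realize_func]

/-- The formula defining `eqOrE b`. -/
def fmlEqOrE {α : Type} (b : Bool) (t s : Lfeq.Term α) : Lfeq.Formula α :=
  if b then t.equal s else fmlE t s

@[simp] lemma realize_fmlEqOrE {α : Type} {M : Type} [Lfeq.Structure M] {b : Bool}
    {t s : Lfeq.Term α} {v : α → M} :
    (fmlEqOrE b t s).Realize v ↔ eqOrE b (t.realize v) (s.realize v) := by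
  cases b
  · exact realize_fmlE
  · exact Formula.realize_equal

section CoherentFeq

variable {mx my : ℕ} {N : Type} [Lfeq.Structure N] {φ : Lfeq.Formula (Fin mx ⊕ Fin my)}
  {e : Fin mx → N} {c : ℕ ⊕ ℝ → Bool → Fin my → N}

/-- The members of a family indexed by natural numbers, as a single tuple. -/
def basePart (c : ℕ ⊕ ℝ → Bool → Fin my → N) (w : ℕ × Bool × Fin my) : N :=
  c (.inl w.1) w.2.1 w.2.2

/-- The set of all `p` such that the `p`-th member of the family `c` is not independent from `e`
over the base. -/
def dependentSet (e : Fin mx → N) (c : ℕ ⊕ ℝ → Bool → Fin my → N) : Set ℝ :=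
  {p : ℝ | ∃ (b : Bool) (t : Lfeq.Term ((ℕ × Bool × Fin my) ⊕ Fin mx))
    (s : Lfeq.Term ((ℕ × Bool × Fin my) ⊕ Fin my)),
    eqOrE b (t.realize (Sum.elim (basePart c) e))
      (s.realize (Sum.elim (basePart c) (c (.inr p) false))) ∧
    ¬ ∃ τ : Lfeq.Term (ℕ × Bool × Fin my),
      eqOrE b (t.realize (Sum.elim (basePart c) e)) (τ.realize (basePart c))}

lemma Coherent.formula_iff
    (hc : ∀ (d : TestPair Lfeq my) (p q : ℝ), p < q → Coherent φ d .inl (.inr p) (.inr q) e c)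
    {n : ℕ} (ψ : Lfeq.Formula ((Fin n × Bool × Fin my) ⊕ Fin my)) (p : ℝ) :
    ψ.Realize (Sum.elim (fun w => basePart c (w.1, w.2)) (c (.inr p) false)) ↔
      ψ.Realize (Sum.elim (fun w => basePart c (w.1, w.2)) (c (.inr p) true)) :=
  (hc ⟨n, ψ, ⊥⟩ p (p + 1) (lt_add_one p)).2.2.1

lemma Coherent.feqP_iff
    (hc : ∀ (d : TestPair Lfeq my) (p q : ℝ), p < q → Coherent φ d .inl (.inr p) (.inr q) e c)
    (p : ℝ) (t : Lfeq.Term ((ℕ × Bool × Fin my) ⊕ Fin my)) :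
    feqP (t.realize (Sum.elim (basePart c) (c (.inr p) false))) ↔
      feqP (t.realize (Sum.elim (basePart c) (c (.inr p) true))) := by
  obtain ⟨n, h⟩ := exists_term_over_fin t
  obtain ⟨t', ht'⟩ := h n le_rfl
  simpa only [realize_fmlP, ht'] using Coherent.formula_iff hc (fmlP t') p

lemma Coherent.feqQ_iff
    (hc : ∀ (d : TestPair Lfeq my) (p q : ℝ), p < q → Coherent φ d .inl (.inr p) (.inr q) e c)
    (p : ℝ) (t : Lfeq.Term ((ℕ × Bool × Fin my) ⊕ Fin my)) :
    feqQ (t.realize (Sum.elim (basePart c) (c (.inr p) false))) ↔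
      feqQ (t.realize (Sum.elim (basePart c) (c (.inr p) true))) := by
  obtain ⟨n, h⟩ := exists_term_over_fin t
  obtain ⟨t', ht'⟩ := h n le_rfl
  simpa only [realize_fmlQ, ht'] using Coherent.formula_iff hc (fmlQ t') p

lemma Coherent.eqOrE_iff
    (hc : ∀ (d : TestPair Lfeq my) (p q : ℝ), p < q → Coherent φ d .inl (.inr p) (.inr q) e c)
    (b : Bool) (p : ℝ) (t s : Lfeq.Term ((ℕ × Bool × Fin my) ⊕ Fin my)) :
    eqOrE b (t.realize (Sum.elim (basePart c) (c (.inr p) false)))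
        (s.realize (Sum.elim (basePart c) (c (.inr p) false))) ↔
      eqOrE b (t.realize (Sum.elim (basePart c) (c (.inr p) true)))
        (s.realize (Sum.elim (basePart c) (c (.inr p) true))) := by
  obtain ⟨n, h⟩ := exists_term_over_fin t
  obtain ⟨m, h'⟩ := exists_term_over_fin s
  obtain ⟨t', ht'⟩ := h (max n m) (le_max_left _ _)
  obtain ⟨s', hs'⟩ := h' (max n m) (le_max_right _ _)
  have hiff := Coherent.formula_iff hc (fmlEqOrE b t' s') p
  simpa only [ht', hs', realize_fmlEqOrE] using hiff

/-- Two distinct real-indexed members of a coherent family are independent over the base. -/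
lemma Coherent.exists_base_term (hN : IsFeqStructure N)
    (hc : ∀ (d : TestPair Lfeq my) (p q : ℝ), p < q → Coherent φ d .inl (.inr p) (.inr q) e c)
    {b b₁ b₂ : Bool} {p q : ℝ} (hpq : p < q) {t s : Lfeq.Term ((ℕ × Bool × Fin my) ⊕ Fin my)}
    (h : eqOrE b (t.realize (Sum.elim (basePart c) (c (.inr p) b₁)))
      (s.realize (Sum.elim (basePart c) (c (.inr q) b₂)))) :
    ∃ τ : Lfeq.Term (ℕ × Bool × Fin my),
      eqOrE b (s.realize (Sum.elim (basePart c) (c (.inr q) b₂))) (τ.realize (basePart c)) ∧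
      eqOrE b (t.realize (Sum.elim (basePart c) (c (.inr p) b₁))) (τ.realize (basePart c)) := by
  obtain ⟨n, hn⟩ := exists_term_over_fin t
  obtain ⟨m, hm⟩ := exists_term_over_fin s
  obtain ⟨t', ht'⟩ := hn (max n m) (le_max_left _ _)
  obtain ⟨s', hs'⟩ := hm (max n m) (le_max_right _ _)
  let d : TestPair Lfeq my := ⟨max n m, ⊥, fmlEqOrE b
    (t'.relabel (Sum.map id fun l => .inl (b₁, l))) (s'.relabel (Sum.map id fun l => .inr (b₂, l)))⟩
  have hd : ∀ y y' : Bool → Fin my → N, d.Double (fun u => c (.inl u)) y y' ↔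
      eqOrE b (t.realize (Sum.elim (basePart c) (y b₁)))
        (s.realize (Sum.elim (basePart c) (y' b₂))) := by
    intro y y'
    rw [← ht', ← hs']
    simp only [d, TestPair.Double, realize_fmlEqOrE, Term.realize_relabel, Sum.elim_comp_map]
    exact Iff.rfl
  have hiff := (hc d p q hpq).2.2.2
  rw [hd, hd] at hiff
  have h' := hiff.2 h
  let τ : Lfeq.Term (ℕ × Bool × Fin my) :=
    t.relabel (Sum.elim id fun l => (max n m, b₁, l))
  have hτ : τ.realize (basePart c) =
      t.realize (Sum.elim (basePart c) (c (.inl (max n m)) b₁)) := by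
    simp only [τ, Term.realize_relabel]
    congr 1
    ext (i | i) <;> rfl
  have h'' := eqOrE_symm hN b h'
  rw [← hτ] at h''
  exact ⟨τ, h'', eqOrE_trans hN b h h''⟩

instance : Countable (Σ n, Lfeq.Functions n) := by
  refine Function.Injective.countable (β := ℕ) (f := Sigma.fst) ?_
  rintro ⟨n, f⟩ ⟨m, g⟩ h
  cases f
  cases g
  rfl

lemma Coherent.countable_dependent (hN : IsFeqStructure N)
    (hc : ∀ (d : TestPair Lfeq my) (p q : ℝ), p < q → Coherent φ d .inl (.inr p) (.inr q) e c) :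
    (dependentSet e c).Countable := by
  simp only [dependentSet, Set.ofPred_exists]
  refine Set.countable_iUnion fun b => Set.countable_iUnion fun t => Set.Subsingleton.countable ?_
  suffices h : ∀ p q : ℝ, p < q → ∀ s s' : Lfeq.Term ((ℕ × Bool × Fin my) ⊕ Fin my),
      eqOrE b (t.realize (Sum.elim (basePart c) e))
        (s.realize (Sum.elim (basePart c) (c (.inr p) false))) →
      eqOrE b (t.realize (Sum.elim (basePart c) e))
        (s'.realize (Sum.elim (basePart c) (c (.inr q) false))) →
      ∃ τ : Lfeq.Term (ℕ × Bool × Fin my),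
        eqOrE b (t.realize (Sum.elim (basePart c) e)) (τ.realize (basePart c)) by
    intro p hp q hq
    simp only [Set.mem_iUnion, Set.mem_ofPred_eq] at hp hq
    obtain ⟨s, hs, hn⟩ := hp
    obtain ⟨s', hs', -⟩ := hq
    by_contra hpq
    obtain hlt | hlt := lt_or_gt_of_ne hpq
    · exact hn (h p q hlt s s' hs hs')
    · exact hn (h q p hlt s' s hs' hs)
  intro p q hpq s s' hs hs'
  obtain ⟨τ, -, hτ⟩ := Coherent.exists_base_term hN hc hpq
    (eqOrE_trans hN b (eqOrE_symm hN b hs) hs')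
  exact ⟨τ, eqOrE_trans hN b hs hτ⟩

lemma exists_lt_notMem_of_countable {S : Set ℝ} (hS : S.Countable) :
    ∃ p q : ℝ, p < q ∧ p ∉ S ∧ q ∉ S := by
  obtain ⟨p, hp, -, -⟩ := hS.dense_compl ℝ |>.exists_between (zero_lt_one (α := ℝ))
  obtain ⟨q, hq, hpq, -⟩ := hS.dense_compl ℝ |>.exists_between (lt_add_one p)
  exact ⟨p, q, hpq, hp, hq⟩

/-- Two members of a coherent family which are independent from `e` over the base form, together
with `e`, a triangle whose sides can be amalgamated after replacing one vertex by its sibling. -/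
lemma Coherent.exists_amalgam (hN : IsFeqStructure N)
    (hc : ∀ (d : TestPair Lfeq my) (p q : ℝ), p < q → Coherent φ d .inl (.inr p) (.inr q) e c) :
    ∃ (D : Type) (_ : Lfeq.Structure D) (f₀ f₁ f₂ : N ↪[Lfeq] D) (p q : ℝ), IsFeqStructure D ∧
      p < q ∧ f₁ ∘ e = f₂ ∘ e ∧ f₂ ∘ c (.inr p) false = f₀ ∘ c (.inr p) true ∧
      f₁ ∘ c (.inr q) false = f₀ ∘ c (.inr q) false := by
  obtain ⟨p, q, hpq, hp, hq⟩ :=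
    exists_lt_notMem_of_countable (Coherent.countable_dependent hN hc)
  let U : Fin 3 → Type := fun k => match k with
    | 0 => Fin mx
    | 1 => Fin my
    | 2 => Fin my
  let u : (i k : Fin 3) → U k → N := fun i k => match k with
    | 0 => e
    | 1 => c (.inr p) (decide (i = 0))
    | 2 => c (.inr q) false
  have key : ∀ r : ℝ, r ∉ dependentSet e c → ∀ b (t : Lfeq.Term ((ℕ × Bool × Fin my) ⊕ Fin mx))
      (s : Lfeq.Term ((ℕ × Bool × Fin my) ⊕ Fin my)), eqOrE b (t.realize (Sum.elim (basePart c) e))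
        (s.realize (Sum.elim (basePart c) (c (.inr r) false))) →
      ∃ τ : Lfeq.Term (ℕ × Bool × Fin my),
        eqOrE b (t.realize (Sum.elim (basePart c) e)) (τ.realize (basePart c)) :=
    fun r hr b t s h => by_contra fun h' => hr ⟨b, t, s, h, h'⟩
  have key' : ∀ r : ℝ, r ∉ dependentSet e c → ∀ b (t : Lfeq.Term ((ℕ × Bool × Fin my) ⊕ Fin mx))
      (s : Lfeq.Term ((ℕ × Bool × Fin my) ⊕ Fin my)),
      eqOrE b (s.realize (Sum.elim (basePart c) (c (.inr r) false)))
        (t.realize (Sum.elim (basePart c) e)) →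
      ∃ τ : Lfeq.Term (ℕ × Bool × Fin my),
        eqOrE b (s.realize (Sum.elim (basePart c) (c (.inr r) false))) (τ.realize (basePart c)) := by
    intro r hr b t s h
    obtain ⟨τ, hτ⟩ := key r hr b t s (eqOrE_symm hN b h)
    exact ⟨τ, eqOrE_trans hN b h hτ⟩
  have htri := exists_triangle hN (basePart c) u ?_ ?_ ?_ ?_
  · obtain ⟨D, S, f, hD, hf⟩ := htri
    exact ⟨D, S, f 0, f 1, f 2, p, q, hD, hpq, funext (hf 1 2 0 (by decide) (by decide)),
      funext (hf 2 0 1 (by decide) (by decide)), funext (hf 1 0 2 (by decide) (by decide))⟩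
  · intro i j k _ _ t
    match k with
    | 0 => exact id
    | 1 =>
      have h := Coherent.feqP_iff hc p t
      simp only [u]
      cases decide (i = 0) <;> cases decide (j = 0) <;> first | exact id | exact h.1 | exact h.2
    | 2 => exact id
  · intro i j k _ _ t
    match k with
    | 0 => exact id
    | 1 =>
      have h := Coherent.feqQ_iff hc p t
      simp only [u]
      cases decide (i = 0) <;> cases decide (j = 0) <;> first | exact id | exact h.1 | exact h.2
    | 2 => exact id
  · intro b i j k _ _ t s
    match k with
    | 0 => exact id
    | 1 =>
      have h := Coherent.eqOrE_iff hc b p t s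
      simp only [u]
      cases decide (i = 0) <;> cases decide (j = 0) <;> first | exact id | exact h.1 | exact h.2
    | 2 => exact id
  · intro b i k l hkl hki hli t s h
    match k, l with
    | 0, 0 | 1, 1 | 2, 2 => exact absurd rfl hkl
    | 0, 1 =>
      have hi : decide (i = 0) = false := decide_eq_false hki.symm
      simp only [u, hi] at h ⊢
      exact key p hp b t s h
    | 0, 2 => exact key q hq b t s h
    | 1, 0 =>
      have hi : decide (i = 0) = false := decide_eq_false hli.symm
      simp only [u, hi] at h ⊢
      exact key' p hp b s t h
    | 2, 0 => exact key' q hq b s t h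
    | 1, 2 =>
      obtain ⟨τ, -, hτ⟩ := Coherent.exists_base_term hN hc hpq h
      exact ⟨τ, hτ⟩
    | 2, 1 =>
      obtain ⟨τ, hτ, -⟩ := Coherent.exists_base_term hN hc hpq (eqOrE_symm hN b h)
      exact ⟨τ, hτ⟩

end CoherentFeq

/-- Embeddings of a model of a model completion into a model of the original theory become
elementary in a suitable extension of the latter. -/
lemma IsModelCompletion.exists_realize_iff {L : FirstOrder.Language.{0, 0}} {T T' : L.Theory}
    (h : IsModelCompletion T T') {N D : Type} [L.Structure N] [Nonempty N] [L.Structure D]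
    [Nonempty D] (hN : N ⊨ T') (hD : D ⊨ T) :
    ∃ (N' : Type) (_ : L.Structure N') (f : D → N'), ∀ (g : N ↪[L] D) (m k : ℕ)
      (φ : L.Formula (Fin m ⊕ Fin k)) (x : Fin m → N) (y : Fin k → N),
      φ.Realize (Sum.elim (f ∘ g ∘ x) (f ∘ g ∘ y)) ↔ φ.Realize (Sum.elim x y) := by
  obtain ⟨N', ⟨f⟩⟩ := h.2.1 (Theory.ModelType.of T D)
  let f' : D ↪[L] N' := f
  refine ⟨N', inferInstance, f', fun g m k φ x y => ?_⟩
  have : (φ.relabel finSumFinEquiv).Realize ((f' ∘ g) ∘ Sum.elim x y ∘ finSumFinEquiv.symm) ↔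
      (φ.relabel finSumFinEquiv).Realize (Sum.elim x y ∘ finSumFinEquiv.symm) :=
    h.2.2.1 (Theory.ModelType.of T' N) N' (f'.comp g) _ (φ.relabel finSumFinEquiv)
    (Sum.elim x y ∘ finSumFinEquiv.symm)
  have hxy : (Sum.elim x y ∘ finSumFinEquiv.symm) ∘ finSumFinEquiv = Sum.elim x y := by
    rw [Function.comp_assoc, Equiv.symm_comp_self, Function.comp_id]
  rw [Formula.realize_relabel, Formula.realize_relabel, Function.comp_assoc, hxy, Sum.comp_elim]
    at this
  exact this

/-- The theory `T*_feq` (the model completion of `T_feq`, a complete theory)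
does not have SOP₁: no formula `φ(x̄,ȳ)` exemplifies SOP₁ in the monster model of `T*_feq`
(equivalently, in any model of `T*_feq`). -/
theorem Tfeq_modelCompletion_NSOP1 (T' : Lfeq.Theory)
    (hmc : IsModelCompletion Tfeq T') (hcomp : T'.IsComplete)
    (𝔠 : Theory.ModelType.{0, 0, 0} T') {mx my : ℕ}
    (φ : Lfeq.Formula (Fin mx ⊕ Fin my)) :
    ¬ ExemplifiesSOP1 φ 𝔠 := by
  intro hφ
  obtain ⟨N, S, hne, hN𝔠, e, c, hc⟩ := exists_coherent_family φ hφ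
  have hNT : N ⊨ T' := ⟨fun σ hσ => hN𝔠 σ (Theory.realize_sentence_of_mem T' hσ)⟩
  have hN : IsFeqStructure N := isFeqStructure_of_models (hmc.1 (Theory.ModelType.of T' N))
  obtain ⟨D, SD, f₀, f₁, f₂, p, q, hD, hpq, he, hp, hq⟩ := Coherent.exists_amalgam hN hc
  have hneD : Nonempty D := hne.map f₀
  obtain ⟨N', S', f, hf⟩ := hmc.exists_realize_iff hNT (models_of_isFeqStructure hD)
  obtain ⟨hφp, hinc, -, -⟩ := hc ⟨0, ⊥, ⊥⟩ p q hpq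
  have hφq := (hc ⟨0, ⊥, ⊥⟩ q (q + 1) (lt_add_one q)).1
  rw [← hf f₁, hq] at hφq
  rw [← hf f₂, hp, ← he] at hφp
  rw [← realize_compatFormula, ← hf f₀, realize_compatFormula] at hinc
  exact hinc ⟨_, hφq, hφp⟩

end SopPaper
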